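/- arXiv:2001.01199 — 2 statements merged into one kernel-verified Lean document; each statement's English description precedes it below -/
import Mathlib

section
/- Let {X_k} be a time-homogeneous Markov chain on a finite state space S with irreducible transition probability matrix P, let f : S → [a,b], and write S_{1,m} = f(X_1) + ⋯ + f(X_m). Then for every m ≥ 1 and all states x, y ∈ S, E[S_{1,m} | X_1 = x] − E[S_{1,m} | X_1 = y] ≤ (b−a) · E[T_y | X_1 = x]; in particular max_{x,y ∈ S} { E[S_{1,m} | X_1 = x] − E[S_{1,m} | X_1 = y] } ≤ (b−a) · HitT(P). -/
/-!
Shifting `f` by `a` changes `expSum P f m x` by `m * a` for every starting state, so one may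
compare sums of `g = f - a`, which takes values in `[0, b - a]`. For `g`, first-step analysis
shows by induction on `m` that the difference of the expected partial sums started at `x` and
at `y` is at most `(b - a) * ∑ n < m, Pr(T_y > n | X_1 = x)`: if `x ≠ y`, the first term
contributes at most `b - a`, and replacing `E_y[S_{1,m+1}]` by the smaller quantity
`E_y[S_{1,m}]` (here `g ≥ 0` is used) leaves an average over the next state of the same
differences (`expSum_diff_le_sum_survive`).

The truncated sums are then bounded by the full series, provided that it converges, for
otherwise `hitExp` would be a junk value. Convergence (`summable_survive`) comes from
irreducibility: some `N` and `ρ < 1` satisfy `Pr(T_y > N | X_1 = x) ≤ ρ` for all `x`, and then the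
survival probabilities contract by the factor `ρ` every `N` steps.
-/

open Finset

namespace MC

variable {S : Type*}

/-- `q` is a probability distribution on the finite state space `S`. -/
def IsProbVec [Fintype S] (q : S → ℝ) : Prop :=
  (∀ x, 0 ≤ q x) ∧ ∑ x, q x = 1

/-- `P` is a transition probability matrix (row-stochastic). -/
def IsStochastic [Fintype S] (P : S → S → ℝ) : Prop :=
  (∀ x y, 0 ≤ P x y) ∧ ∀ x, ∑ y, P x y = 1

/-- `n`-step transition probabilities `Pⁿ(x,y)`. -/
def matPow [Fintype S] [DecidableEq S] (P : S → S → ℝ) : ℕ → S → S → ℝ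
  | 0 => fun x y => if x = y then 1 else 0
  | n + 1 => fun x y => ∑ z, matPow P n x z * P z y

/-- `P` is irreducible: any state can reach any state. -/
def IsIrreducible [Fintype S] [DecidableEq S] (P : S → S → ℝ) : Prop :=
  ∀ x y, ∃ n, 1 ≤ n ∧ 0 < matPow P n x y

/-- `survive P y n x = Pr(T_y > n | X_1 = x)`, where
`T_y = inf {n ≥ 0 : X_{n+1} = y}` is the hitting time of `y`. -/
def survive [Fintype S] [DecidableEq S] (P : S → S → ℝ) (y : S) : ℕ → S → ℝ
  | 0 => fun x => if x = y then 0 else 1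
  | n + 1 => fun x => if x = y then 0 else ∑ z, P x z * survive P y n z

/-- The expected hitting time `E[T_y | X_1 = x] = ∑_{n ≥ 0} Pr(T_y > n | X_1 = x)`. -/
noncomputable def hitExp [Fintype S] [DecidableEq S] (P : S → S → ℝ) (x y : S) : ℝ :=
  (∑' n, ENNReal.ofReal (survive P y n x)).toReal

/-- The maximum expected hitting time `HitT(P) = max_{x,y} E[T_y | X_1 = x]`. -/
noncomputable def HitT [Fintype S] [DecidableEq S] (P : S → S → ℝ) : ℝ :=
  ⨆ x, ⨆ y, hitExp P x y

/-- The probability of the cylinder set given by the path `ω = (X_1, …, X_{n+1})`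
for the chain with initial distribution `q` and transition matrix `P`. -/
noncomputable def pathProb [Fintype S] (q : S → ℝ) (P : S → S → ℝ) {n : ℕ}
    (ω : Fin (n + 1) → S) : ℝ :=
  q (ω 0) * ∏ i : Fin n, P (ω i.castSucc) (ω i.succ)

/-- `Pr_q(A)` for an event `A` determined by the first `n+1` states `(X_1, …, X_{n+1})`. -/
noncomputable def chainProb [Fintype S] (q : S → ℝ) (P : S → S → ℝ) (n : ℕ)
    (A : Set (Fin (n + 1) → S)) : ℝ :=
  ∑ ω : Fin (n + 1) → S, A.indicator (pathProb q P) ω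

/-- `stepDist q P k` is the distribution of `X_{k+1}` when `X_1 ∼ q`. -/
def stepDist [Fintype S] (q : S → ℝ) (P : S → S → ℝ) : ℕ → S → ℝ
  | 0 => q
  | k + 1 => fun y => ∑ x, stepDist q P k x * P x y

end MC

namespace MC

/-- `expSum P f m x = E[S_{1,m} | X_1 = x] = E[f(X_1) + ⋯ + f(X_m) | X_1 = x]`. -/
noncomputable def expSum {S : Type*} [Fintype S] [DecidableEq S]
    (P : S → S → ℝ) (f : S → ℝ) (m : ℕ) (x : S) : ℝ :=
  ∑ k ∈ Finset.range m, ∑ z, matPow P k x z * f z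

end MC

namespace MC

variable {S : Type*} [Fintype S] [DecidableEq S] {P : S → S → ℝ}

/-- First-step decomposition of the `n`-step probabilities; the definition of `matPow` splits off
the last step instead. -/
lemma matPow_succ_left (P : S → S → ℝ) (n : ℕ) (x y : S) :
    matPow P (n + 1) x y = ∑ z, P x z * matPow P n z y := by
  induction n generalizing y with
  | zero => simp [matPow]
  | succ n ih =>
    calc matPow P (n + 2) x y = ∑ z, matPow P (n + 1) x z * P z y := rfl
      _ = ∑ z, ∑ w, P x w * (matPow P n w z * P z y) := by
        simp only [ih, Finset.sum_mul, mul_assoc]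
      _ = ∑ w, P x w * matPow P (n + 1) w y := by
        rw [Finset.sum_comm]
        simp only [matPow, Finset.mul_sum]

lemma matPow_nonneg (hP : IsStochastic P) (n : ℕ) (x y : S) : 0 ≤ matPow P n x y := by
  induction n generalizing y with
  | zero => simp only [matPow]; split_ifs <;> norm_num
  | succ n ih => exact Finset.sum_nonneg fun z _ => mul_nonneg (ih z) (hP.1 z y)

lemma matPow_sum (hP : IsStochastic P) (n : ℕ) (x : S) : ∑ y, matPow P n x y = 1 := by
  induction n generalizing x with
  | zero => simp [matPow]
  | succ n ih =>
    simp only [matPow_succ_left]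
    rw [Finset.sum_comm]
    simp only [← Finset.mul_sum, ih, mul_one, hP.2]

lemma matPow_le_one (hP : IsStochastic P) (n : ℕ) (x y : S) : matPow P n x y ≤ 1 := by
  rw [← matPow_sum hP n x]
  exact Finset.single_le_sum (f := fun z => matPow P n x z)
    (fun z _ => matPow_nonneg hP n x z) (Finset.mem_univ y)

lemma survive_self (y : S) (n : ℕ) : survive P y n y = 0 := by
  cases n <;> simp [survive]

lemma survive_nonneg (hP : IsStochastic P) (y : S) (n : ℕ) (x : S) : 0 ≤ survive P y n x := by
  induction n generalizing x with
  | zero => simp only [survive]; split_ifs <;> norm_num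
  | succ n ih =>
    simp only [survive]
    split_ifs
    · exact le_rfl
    · exact Finset.sum_nonneg fun z _ => mul_nonneg (hP.1 x z) (ih z)

/-- A chain that sits at `y` after `n` steps has hit `y` by then. -/
lemma survive_le_one_sub_matPow (hP : IsStochastic P) (y : S) (n : ℕ) (x : S) :
    survive P y n x ≤ 1 - matPow P n x y := by
  induction n generalizing x with
  | zero => simp only [survive, matPow]; split_ifs <;> norm_num
  | succ n ih =>
    simp only [survive]
    split_ifs
    · linarith [matPow_le_one hP (n + 1) x y]
    · calc ∑ z, P x z * survive P y n z ≤ ∑ z, P x z * (1 - matPow P n z y) :=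
            Finset.sum_le_sum fun z _ => mul_le_mul_of_nonneg_left (ih z) (hP.1 x z)
        _ = 1 - matPow P (n + 1) x y := by
            rw [matPow_succ_left]
            simp only [mul_sub, mul_one, Finset.sum_sub_distrib, hP.2]

lemma survive_le_one (hP : IsStochastic P) (y : S) (n : ℕ) (x : S) : survive P y n x ≤ 1 := by
  linarith [survive_le_one_sub_matPow hP y n x, matPow_nonneg hP n x y]

/-- A uniform bound on survival up to time `N` can be restarted after `n` steps. -/
lemma survive_add_le (hP : IsStochastic P) (y : S) {N : ℕ} {ρ : ℝ}
    (hρ : ∀ x, survive P y N x ≤ ρ) (n : ℕ) (x : S) :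
    survive P y (n + N) x ≤ ρ * survive P y n x := by
  by_cases hx : x = y
  · subst hx; simp [survive_self]
  induction n generalizing x with
  | zero => simpa [survive, hx] using hρ x
  | succ n ih =>
    rw [Nat.add_right_comm]
    simp only [survive, if_neg hx, Finset.mul_sum]
    refine Finset.sum_le_sum fun z _ => ?_
    have hz : survive P y (n + N) z ≤ ρ * survive P y n z := by
      by_cases hz : z = y
      · subst hz; simp [survive_self]
      · exact ih z hz
    calc P x z * survive P y (n + N) z ≤ P x z * (ρ * survive P y n z) :=
          mul_le_mul_of_nonneg_left hz (hP.1 x z)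
      _ = ρ * (P x z * survive P y n z) := by ring

lemma survive_antitone (hP : IsStochastic P) (y x : S) : Antitone fun n => survive P y n x :=
  antitone_nat_of_succ_le fun n => by
    simpa using survive_add_le hP y (survive_le_one hP y 1) n x

/-- By irreducibility each state reaches `y` with positive probability within some number of
steps; finiteness of `S` makes both the number of steps and the probability uniform. -/
lemma exists_survive_le (hP : IsStochastic P) (hirr : IsIrreducible P) (y : S) :
    ∃ N : ℕ, ∃ ρ < 1, ∀ x, survive P y N x ≤ ρ := by
  choose k _ hk using fun x => hirr x y
  have : Nonempty S := ⟨y⟩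
  obtain ⟨x₀, hx₀⟩ := Finite.exists_max k
  obtain ⟨x₁, hx₁⟩ := Finite.exists_max fun x => survive P y (k x₀) x
  refine ⟨k x₀, survive P y (k x₀) x₁, ?_, hx₁⟩
  calc survive P y (k x₀) x₁ ≤ survive P y (k x₁) x₁ := survive_antitone hP y x₁ (hx₀ x₁)
    _ ≤ 1 - matPow P (k x₁) x₁ y := survive_le_one_sub_matPow hP y _ _
    _ < 1 := by linarith [hk x₁]

/-- The expected hitting times are finite. -/
lemma summable_survive (hP : IsStochastic P) (hirr : IsIrreducible P) (x y : S) :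
    Summable fun n => survive P y n x := by
  obtain ⟨N, ρ, hρ1, hρ⟩ := exists_survive_le hP hirr y
  set A := ∑ n ∈ Finset.range N, survive P y n x
  refine summable_of_sum_range_le (c := A / (1 - ρ))
    (fun n => survive_nonneg hP y n x) fun K => ?_
  -- The partial sum `s` up to `K` satisfies `s ≤ A + ρ * s`.
  have h₁ : ∑ n ∈ Finset.range K, survive P y n x
      ≤ ∑ n ∈ Finset.range (N + K), survive P y n x :=
    Finset.sum_le_sum_of_subset_of_nonneg (Finset.range_mono (Nat.le_add_left K N))
      fun n _ _ => survive_nonneg hP y n x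
  have h₂ : ∑ n ∈ Finset.range K, survive P y (N + n) x
      ≤ ρ * ∑ n ∈ Finset.range K, survive P y n x := by
    rw [Finset.mul_sum]
    refine Finset.sum_le_sum fun n _ => ?_
    rw [Nat.add_comm]
    exact survive_add_le hP y hρ n x
  rw [Finset.sum_range_add] at h₁
  rw [le_div_iff₀ (by linarith)]
  linarith

lemma sum_survive_le_hitExp (hP : IsStochastic P) (hirr : IsIrreducible P) (x y : S) (m : ℕ) :
    ∑ n ∈ Finset.range m, survive P y n x ≤ hitExp P x y := by
  have hs := summable_survive hP hirr x y
  have h₀ : ∀ n, 0 ≤ survive P y n x := fun n => survive_nonneg hP y n x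
  rw [hitExp, ← ENNReal.ofReal_tsum_of_nonneg h₀ hs, ENNReal.toReal_ofReal (tsum_nonneg h₀)]
  exact hs.sum_le_tsum _ fun n _ => h₀ n

lemma expSum_succ (P : S → S → ℝ) (f : S → ℝ) (m : ℕ) (x : S) :
    expSum P f (m + 1) x = f x + ∑ z, P x z * expSum P f m z := by
  have h : ∀ k, ∑ w, matPow P (k + 1) x w * f w
      = ∑ z, P x z * ∑ w, matPow P k z w * f w := fun k => by
    simp only [matPow_succ_left, Finset.sum_mul, Finset.mul_sum, mul_assoc]
    exact Finset.sum_comm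
  simp only [expSum, Finset.sum_range_succ', h]
  simp only [Finset.mul_sum (Finset.range m)]
  rw [Finset.sum_comm (s := Finset.univ), add_comm]
  simp [matPow]

lemma expSum_sub_const (hP : IsStochastic P) (f : S → ℝ) (a : ℝ) (m : ℕ) (x : S) :
    expSum P (fun z => f z - a) m x = expSum P f m x - m * a := by
  simp [expSum, mul_sub, Finset.sum_sub_distrib, ← Finset.sum_mul, matPow_sum hP]

/-- The truncated estimate for functions with values in `[0, c]`; nonnegativity makes the
expected partial sums started at `y` monotone in `m`. -/
lemma expSum_diff_le_sum_survive (hP : IsStochastic P) {g : S → ℝ} {c : ℝ}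
    (hg₀ : ∀ x, 0 ≤ g x) (hgc : ∀ x, g x ≤ c) (y : S) (m : ℕ) (x : S) :
    expSum P g m x - expSum P g m y ≤ c * ∑ n ∈ Finset.range m, survive P y n x := by
  induction m generalizing x with
  | zero => simp [expSum]
  | succ m ih =>
    by_cases hx : x = y
    · subst hx; simp [survive_self]
    have hmono : expSum P g m y ≤ expSum P g (m + 1) y := by
      rw [expSum, expSum, Finset.sum_range_succ]
      exact le_add_of_nonneg_right
        (Finset.sum_nonneg fun z _ => mul_nonneg (matPow_nonneg hP m y z) (hg₀ z))
    have hsurv : ∑ n ∈ Finset.range (m + 1), survive P y n x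
        = 1 + ∑ z, P x z * ∑ n ∈ Finset.range m, survive P y n z := by
      simp only [Finset.sum_range_succ', survive, if_neg hx, Finset.mul_sum]
      rw [Finset.sum_comm, add_comm]
    have hstep : ∑ z, P x z * (expSum P g m z - expSum P g m y)
        ≤ ∑ z, P x z * (c * ∑ n ∈ Finset.range m, survive P y n z) :=
      Finset.sum_le_sum fun z _ => mul_le_mul_of_nonneg_left (ih z) (hP.1 x z)
    have hleft : ∑ z, P x z * (expSum P g m z - expSum P g m y)
        = ∑ z, P x z * expSum P g m z - expSum P g m y := by
      simp only [mul_sub, Finset.sum_sub_distrib, ← Finset.sum_mul, hP.2, one_mul]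
    have hright : ∑ z, P x z * (c * ∑ n ∈ Finset.range m, survive P y n z)
        = c * ∑ z, P x z * ∑ n ∈ Finset.range m, survive P y n z := by
      rw [Finset.mul_sum]
      exact Finset.sum_congr rfl fun z _ => by ring
    rw [hleft, hright] at hstep
    rw [hsurv, expSum_succ P g m x, mul_add, mul_one]
    linarith [hgc x]

lemma hitExp_le_HitT (P : S → S → ℝ) (x y : S) : hitExp P x y ≤ HitT P :=
  (le_ciSup (Finite.bddAbove_range fun y => hitExp P x y) y).trans
    (le_ciSup (Finite.bddAbove_range fun x => ⨆ y, hitExp P x y) x)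

end MC

open MC in
/-- **Conditional expectations of partial sums differ by at most `(b−a)·E[T_y|X_1=x]`.**
For an irreducible finite Markov chain and `f : S → [a,b]`, with
`S_{1,m} = f(X_1) + ⋯ + f(X_m)`, for all `m ≥ 1` and states `x, y`,
`E[S_{1,m}|X_1=x] − E[S_{1,m}|X_1=y] ≤ (b−a)·E[T_y|X_1=x]`; in particular
`max_{x,y} (E[S_{1,m}|X_1=x] − E[S_{1,m}|X_1=y]) ≤ (b−a)·HitT(P)`. -/
theorem expSum_diff_le_hitting {S : Type*} [Fintype S] [DecidableEq S]
    (P : S → S → ℝ) (hP : IsStochastic P) (hirr : IsIrreducible P)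
    (f : S → ℝ) (a b : ℝ) (hf : ∀ x, f x ∈ Set.Icc a b)
    (m : ℕ) (hm : 1 ≤ m) :
    (∀ x y : S, expSum P f m x - expSum P f m y ≤ (b - a) * hitExp P x y) ∧
      (⨆ x : S, ⨆ y : S, (expSum P f m x - expSum P f m y)) ≤ (b - a) * HitT P := by
  have hmain : ∀ x y : S, expSum P f m x - expSum P f m y ≤ (b - a) * hitExp P x y := by
    intro x y
    have hab : 0 ≤ b - a := sub_nonneg.2 ((hf x).1.trans (hf x).2)
    have h := expSum_diff_le_sum_survive hP (g := fun z => f z - a) (c := b - a)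
      (fun z => sub_nonneg.2 (hf z).1) (fun z => sub_le_sub_right (hf z).2 a) y m x
    rw [expSum_sub_const hP, expSum_sub_const hP] at h
    have h' := mul_le_mul_of_nonneg_left (sum_survive_le_hitExp hP hirr x y m) hab
    linarith
  refine ⟨hmain, ?_⟩
  -- Over an empty state space both suprema are `0`, and `a ≤ b` is not available.
  rcases isEmpty_or_nonempty S with hS | hS
  · simp [HitT]
  · refine ciSup_le fun x => ciSup_le fun y => (hmain x y).trans ?_
    exact mul_le_mul_of_nonneg_left (hitExp_le_HitT P x y)
      (sub_nonneg.2 ((hf x).1.trans (hf x).2))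
end

section
/- Consider the two-state Markov chain on S = {0,1} with P(0,1) = p, P(1,0) = r, p, r ∈ (0,1], initial distribution q, and f : S → [a,b]. Then for every t > 0, Pr_q( |Σ_{k=1}^n ( f(X_k) − E_q[f(X_k)] )| ≥ t ) ≤ 2 exp( −2 min{p², r²} t² / ( n (b−a)² ) ). -/
/-!
The bound is the Azuma–Hoeffding inequality for the Doob martingale of `∑ f(X_k)`, carried out on
moment generating functions by conditioning on the first state. Let `g_n(x)` be the expectation of
`∑_{k=1}^n f(X_k)` from `X_1 = x`, so `g_{n+1} = f + P g_n`. By induction on `n`, for every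
initial law `q`, `E_q exp(s ∑ f(X_k)) ≤ exp(s E_q[g_n(X_1)] + n s² c² / 8)` (`expMoment_le`):
the inductive step is Hoeffding's lemma (`hoeffding_two_point`) applied to `g_{n+1}(X_1)`, and needs
only that each `g_n` oscillates by at most `c`. For the two-state chain, with `λ = 1 - p - r`, one has
`g_n(1) - g_n(0) = (f(1) - f(0)) ∑_{j<n} λ^j`, and the geometric sum lies in
`[0, 1 / min{p, r}]`; hence `c = (b - a) / min{p, r}` works (`partialMean_diff`,
`geom_bound`). A Chernoff bound with the optimal `s` finishes the proof.
-/

open Finset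

namespace MC

/-- `partialMean P f n x` is the expectation of `f(X_1) + ⋯ + f(X_n)` for the chain with
`X_1 = x`. -/
noncomputable def partialMean {S : Type*} [Fintype S] (P : S → S → ℝ) (f : S → ℝ) : ℕ → S → ℝ
  | 0 => fun _ => 0
  | n + 1 => fun x => f x + ∑ y, P x y * partialMean P f n y

/-- The exponential moment `E_q[exp(s (f(X_1) + ⋯ + f(X_n)))]`, as a sum over paths of length
`n + 1` whose last state does not enter the exponent. -/
noncomputable def expMoment {S : Type*} [Fintype S] (P : S → S → ℝ) (f : S → ℝ) (s : ℝ) (n : ℕ)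
    (q : S → ℝ) : ℝ :=
  ∑ ω : Fin (n + 1) → S, pathProb q P ω * Real.exp (s * ∑ k : Fin n, f (ω k.castSucc))

/-! ### Conditioning on the first state -/

section General

variable {S : Type*} [Fintype S]

/-- First-step decomposition; the definition of `stepDist` peels off the last step instead. -/
lemma stepDist_succ' (q : S → ℝ) (P : S → S → ℝ) (k : ℕ) (y : S) :
    stepDist q P (k + 1) y = ∑ x, q x * stepDist (P x) P k y := by
  induction k generalizing y with
  | zero => rfl
  | succ k ih =>
    rw [stepDist]
    simp_rw [ih, Finset.sum_mul]
    rw [Finset.sum_comm]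
    refine Finset.sum_congr rfl fun x _ => ?_
    rw [stepDist, Finset.mul_sum]
    exact Finset.sum_congr rfl fun z _ => by ring

lemma sum_mean_eq (q : S → ℝ) (P : S → S → ℝ) (f : S → ℝ) (n : ℕ) :
    ∑ k : Fin n, ∑ x, stepDist q P (k : ℕ) x * f x = ∑ x, q x * partialMean P f n x := by
  induction n generalizing q with
  | zero => simp [partialMean]
  | succ n ih =>
    rw [Fin.sum_univ_succ]
    simp only [Fin.val_zero, Fin.val_succ, partialMean, mul_add, Finset.sum_add_distrib]
    congr 1
    simp_rw [← ih, stepDist_succ', Finset.sum_mul, Finset.mul_sum]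
    rw [Finset.sum_comm' (t' := Finset.univ) (s' := fun _ => Finset.univ) (by simp)]
    rw [Finset.sum_congr rfl fun y _ => Finset.sum_comm]
    rw [Finset.sum_comm]
    refine Finset.sum_congr rfl fun x _ => ?_
    rw [Finset.sum_comm]
    exact Finset.sum_congr rfl fun k _ => Finset.sum_congr rfl fun y _ => by ring

lemma pathProb_cons (q : S → ℝ) (P : S → S → ℝ) {n : ℕ} (x : S) (ω : Fin (n + 1) → S) :
    pathProb q P (Fin.cons x ω : Fin (n + 2) → S) = q x * pathProb (P x) P ω := by
  simp only [pathProb, Fin.cons_zero, Fin.prod_univ_succ, Fin.castSucc_zero, Fin.cons_succ,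
    Fin.castSucc_succ]

lemma expMoment_succ (P : S → S → ℝ) (f : S → ℝ) (s : ℝ) (n : ℕ) (q : S → ℝ) :
    expMoment P f s (n + 1) q = ∑ x, q x * (Real.exp (s * f x) * expMoment P f s n (P x)) := by
  simp only [expMoment]
  rw [← (Fin.consEquiv (fun _ : Fin (n + 2) => S)).sum_comp, Fintype.sum_prod_type]
  refine Finset.sum_congr rfl fun x _ => ?_
  rw [Finset.mul_sum, Finset.mul_sum]
  refine Finset.sum_congr rfl fun ω _ => ?_
  rw [show (Fin.consEquiv fun _ : Fin (n + 2) => S) (x, ω) = Fin.cons x ω from rfl,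
    pathProb_cons]
  simp only [Fin.sum_univ_succ, Fin.castSucc_zero,
    Fin.cons_zero, Fin.castSucc_succ, Fin.cons_succ, mul_add, Real.exp_add]
  ring

lemma expMoment_zero (P : S → S → ℝ) (f : S → ℝ) (s : ℝ) {q : S → ℝ} (hq : IsProbVec q) :
    expMoment P f s 0 q = 1 := by
  simp only [expMoment, pathProb]
  rw [← (Equiv.funUnique (Fin 1) S).symm.sum_comp]
  simpa using hq.2

lemma pathProb_nonneg {q : S → ℝ} {P : S → S → ℝ} (hq : IsProbVec q)
    (hP : ∀ x, IsProbVec (P x)) {n : ℕ} (ω : Fin (n + 1) → S) : 0 ≤ pathProb q P ω :=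
  mul_nonneg (hq.1 _) (Finset.prod_nonneg fun _ _ => (hP _).1 _)

end General

/-! ### Exponential moments and tails -/

open MeasureTheory ProbabilityTheory in
/-- **Hoeffding's lemma** for a probability vector on two points: a function that oscillates by at
most `c` is, once centred, sub-Gaussian with variance proxy `c² / 4`. -/
lemma hoeffding_two_point {q : Fin 2 → ℝ} (hq : IsProbVec q) (g : Fin 2 → ℝ) {c : ℝ}
    (hg : |g 1 - g 0| ≤ c) (s : ℝ) :
    ∑ x, q x * Real.exp (s * g x) ≤ Real.exp (s * ∑ x, q x * g x + s ^ 2 * c ^ 2 / 8) := by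
  have h0 := hq.1 0
  have h1 := hq.1 1
  have hsum : q 0 + q 1 = 1 := by simpa using hq.2
  let μ : Measure (Fin 2) :=
    ENNReal.ofReal (q 0) • Measure.dirac 0 + ENNReal.ofReal (q 1) • Measure.dirac 1
  have hint : ∀ F : Fin 2 → ℝ, ∫ x, F x ∂μ = q 0 * F 0 + q 1 * F 1 := by
    intro F
    rw [integral_add_measure ((integrable_dirac (by simp)).smul_measure ENNReal.ofReal_ne_top)
      ((integrable_dirac (by simp)).smul_measure ENNReal.ofReal_ne_top)]
    simp [integral_smul_measure, h0, h1]
  have : IsProbabilityMeasure μ := ⟨by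
    simp [μ, ← ENNReal.ofReal_add h0 h1, hsum]⟩
  have key := hasSubgaussianMGF_of_mem_Icc (μ := μ) (X := g) (a := min (g 0) (g 1))
    (b := max (g 0) (g 1)) (measurable_of_finite g).aemeasurable
    (ae_of_all _ fun x => by fin_cases x <;> simp)
  have hm := key.mgf_le s
  rw [mgf, hint, hint] at hm
  have hc : (max (g 0) (g 1) - min (g 0) (g 1)) = |g 1 - g 0| := max_sub_min_eq_abs _ _
  have hsq : |g 1 - g 0| ^ 2 ≤ c ^ 2 := pow_le_pow_left₀ (abs_nonneg _) hg 2
  set M := q 0 * g 0 + q 1 * g 1 with hM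
  simp only [Fin.sum_univ_two, ← hM]
  calc q 0 * Real.exp (s * g 0) + q 1 * Real.exp (s * g 1)
      = Real.exp (s * M) *
          (q 0 * Real.exp (s * (g 0 - M)) + q 1 * Real.exp (s * (g 1 - M))) := by
        rw [show s * g 0 = s * M + s * (g 0 - M) by ring,
          show s * g 1 = s * M + s * (g 1 - M) by ring, Real.exp_add, Real.exp_add]
        ring_nf
    _ ≤ Real.exp (s * M) * Real.exp (s ^ 2 * c ^ 2 / 8) := by
        refine mul_le_mul_of_nonneg_left (hm.trans (Real.exp_le_exp.2 ?_)) (Real.exp_pos _).le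
        simp only [hc, NNReal.coe_pow, NNReal.coe_div, coe_nnnorm, NNReal.coe_ofNat,
          Real.norm_eq_abs, abs_abs]
        nlinarith [mul_le_mul_of_nonneg_left hsq (sq_nonneg s)]
    _ = _ := by rw [← Real.exp_add]

/-- Azuma–Hoeffding bound on the exponential moment, given a uniform bound `c` on the oscillation
of the conditional means `partialMean P f n`. -/
lemma expMoment_le {P : Fin 2 → Fin 2 → ℝ} (hP : ∀ x, IsProbVec (P x)) (f : Fin 2 → ℝ) {c : ℝ}
    (hc : ∀ n, |partialMean P f n 1 - partialMean P f n 0| ≤ c) (s : ℝ) (n : ℕ)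
    {q : Fin 2 → ℝ} (hq : IsProbVec q) :
    expMoment P f s n q ≤
      Real.exp (s * ∑ x, q x * partialMean P f n x + n * (s ^ 2 * c ^ 2 / 8)) := by
  induction n generalizing q with
  | zero => simp [expMoment_zero P f s hq, partialMean]
  | succ n ih =>
    rw [expMoment_succ]
    calc ∑ x, q x * (Real.exp (s * f x) * expMoment P f s n (P x))
        ≤ ∑ x, q x * (Real.exp (s * f x) * Real.exp
            (s * ∑ y, P x y * partialMean P f n y + n * (s ^ 2 * c ^ 2 / 8))) := by
          gcongr with x
          · exact hq.1 x
          · exact ih (hP x)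
      _ = (∑ x, q x * Real.exp (s * partialMean P f (n + 1) x)) *
            Real.exp (n * (s ^ 2 * c ^ 2 / 8)) := by
          rw [Finset.sum_mul]
          refine Finset.sum_congr rfl fun x _ => ?_
          rw [← Real.exp_add, mul_assoc, ← Real.exp_add]
          congr 2
          simp only [partialMean]
          ring
      _ ≤ Real.exp (s * ∑ x, q x * partialMean P f (n + 1) x + s ^ 2 * c ^ 2 / 8) *
            Real.exp (n * (s ^ 2 * c ^ 2 / 8)) := by
          gcongr
          exact hoeffding_two_point hq _ (hc (n + 1)) s
      _ = _ := by
          rw [← Real.exp_add]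
          congr 1
          push_cast
          ring

/-- Chernoff bound applied to both tails. -/
lemma chainProb_tail_le {P : Fin 2 → Fin 2 → ℝ} (hP : ∀ x, IsProbVec (P x)) (f : Fin 2 → ℝ)
    {c : ℝ} (hc : ∀ n, |partialMean P f n 1 - partialMean P f n 0| ≤ c)
    {q : Fin 2 → ℝ} (hq : IsProbVec q) (n : ℕ) (t : ℝ) {s : ℝ} (hs : 0 ≤ s) :
    chainProb q P n {ω | t ≤ |∑ k : Fin n, (f (ω k.castSucc) -
        ∑ x, stepDist q P (k : ℕ) x * f x)|} ≤
      2 * Real.exp (-(s * t) + n * (s ^ 2 * c ^ 2 / 8)) := by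
  set m := ∑ x, q x * partialMean P f n x with hm
  simp only [Finset.sum_sub_distrib, sum_mean_eq, ← hm]
  have hU := expMoment_le hP f hc s n hq
  have hL := expMoment_le hP f hc (-s) n hq
  rw [← hm] at hU hL
  calc _ ≤ ∑ ω : Fin (n + 1) → Fin 2,
        (Real.exp (-(s * t) - s * m) *
            (pathProb q P ω * Real.exp (s * ∑ k : Fin n, f (ω k.castSucc))) +
          Real.exp (-(s * t) + s * m) *
            (pathProb q P ω * Real.exp (-s * ∑ k : Fin n, f (ω k.castSucc)))) := by
        unfold chainProb
        refine Finset.sum_le_sum fun ω _ => ?_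
        have hpp := pathProb_nonneg hq hP ω
        set Z := ∑ k : Fin n, f (ω k.castSucc) with hZ
        have hE1 : Real.exp (-(s * t) - s * m) * (pathProb q P ω * Real.exp (s * Z)) =
            pathProb q P ω * Real.exp (s * (Z - m - t)) := by
          rw [mul_left_comm, ← Real.exp_add]
          ring_nf
        have hE2 : Real.exp (-(s * t) + s * m) * (pathProb q P ω * Real.exp (-s * Z)) =
            pathProb q P ω * Real.exp (s * (-(Z - m) - t)) := by
          rw [mul_left_comm, ← Real.exp_add]
          ring_nf
        rw [hE1, hE2]
        by_cases hω : t ≤ |Z - m|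
        · rw [Set.indicator_of_mem (by exact hω), ← mul_add]
          refine le_mul_of_one_le_right hpp ?_
          rcases le_abs.1 hω with h | h
          · have := Real.one_le_exp (mul_nonneg hs (sub_nonneg.2 h))
            linarith [Real.exp_pos (s * (-(Z - m) - t))]
          · have := Real.one_le_exp (mul_nonneg hs (sub_nonneg.2 h))
            linarith [Real.exp_pos (s * (Z - m - t))]
        · rw [Set.indicator_of_notMem (by exact hω)]
          positivity
    _ = Real.exp (-(s * t) - s * m) * expMoment P f s n q +
          Real.exp (-(s * t) + s * m) * expMoment P f (-s) n q := by
        rw [Finset.sum_add_distrib, ← Finset.mul_sum, ← Finset.mul_sum]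
        rfl
    _ ≤ Real.exp (-(s * t) - s * m) * Real.exp (s * m + n * (s ^ 2 * c ^ 2 / 8)) +
          Real.exp (-(s * t) + s * m) * Real.exp (-s * m + n * ((-s) ^ 2 * c ^ 2 / 8)) := by
        gcongr
    _ = _ := by
        rw [← Real.exp_add, ← Real.exp_add, two_mul]
        congr 2 <;> ring

/-! ### Oscillation of the conditional means for the two-state chain -/

/-- The partial geometric sums of ratio `1 - p - r` lie in `[0, 1 / min{p, r}]`; when the ratio is
nonpositive they even lie in `[0, 1]`. -/
lemma geom_bound {p r : ℝ} (hp : p ∈ Set.Ioc (0 : ℝ) 1) (hr : r ∈ Set.Ioc (0 : ℝ) 1) (n : ℕ) :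
    0 ≤ ∑ j ∈ Finset.range n, (1 - p - r) ^ j ∧
      min p r * ∑ j ∈ Finset.range n, (1 - p - r) ^ j ≤ 1 := by
  obtain ⟨hp0, hp1⟩ := hp
  obtain ⟨hr0, hr1⟩ := hr
  have hm0 : 0 < min p r := lt_min hp0 hr0
  have hmp : min p r ≤ p := min_le_left _ _
  have hmr : min p r ≤ r := min_le_right _ _
  rcases le_total 0 (1 - p - r) with h | h
  · induction n with
    | zero => simp
    | succ n ih =>
      rw [geom_sum_succ]
      exact ⟨by nlinarith [mul_nonneg h ih.1], by nlinarith [mul_le_mul_of_nonneg_left ih.2 h]⟩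
  · have key : 0 ≤ ∑ j ∈ Finset.range n, (1 - p - r) ^ j ∧
        ∑ j ∈ Finset.range n, (1 - p - r) ^ j ≤ 1 := by
      induction n with
      | zero => simp
      | succ n ih =>
        rw [geom_sum_succ]
        exact ⟨by nlinarith [mul_le_mul_of_nonpos_left ih.2 h],
          by nlinarith [mul_nonpos_of_nonpos_of_nonneg h ih.1]⟩
    exact ⟨key.1, by nlinarith⟩

/-- The transition matrix of the two-state chain. -/
abbrev twoState (p r : ℝ) : Fin 2 → Fin 2 → ℝ := fun x y =>
  if x = 0 then (if y = 0 then 1 - p else p) else (if y = 0 then r else 1 - r)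

lemma partialMean_diff (p r : ℝ) (f : Fin 2 → ℝ) (n : ℕ) :
    partialMean (twoState p r) f n 1 - partialMean (twoState p r) f n 0 =
      (f 1 - f 0) * ∑ j ∈ Finset.range n, (1 - p - r) ^ j := by
  induction n with
  | zero => simp [partialMean]
  | succ n ih =>
    rw [geom_sum_succ]
    simp only [partialMean, Fin.sum_univ_two, twoState, one_ne_zero, if_true, if_false] at ih ⊢
    linear_combination (1 - p - r) * ih

end MC

open MC in
/-- **Hoeffding inequality for the two-state chain** (Example 1).
For the chain on `{0,1}` with `P(0,1) = p`, `P(1,0) = r`, `p, r ∈ (0,1]`, initial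
distribution `q`, and `f : {0,1} → [a,b]`, for every `t > 0`,
`Pr_q(|∑_{k=1}^n (f(X_k) − E_q[f(X_k)])| ≥ t) ≤ 2 exp(−2 min{p²,r²} t²/(n(b−a)²))`. -/
theorem markov_hoeffding_two_state (p r : ℝ) (hp : p ∈ Set.Ioc (0 : ℝ) 1)
    (hr : r ∈ Set.Ioc (0 : ℝ) 1)
    (q : Fin 2 → ℝ) (hq : IsProbVec q)
    (f : Fin 2 → ℝ) (a b : ℝ) (hf : ∀ x, f x ∈ Set.Icc a b)
    (n : ℕ) (t : ℝ) (ht : 0 < t) :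
    chainProb q
      (fun x y : Fin 2 =>
        if x = 0 then (if y = 0 then 1 - p else p) else (if y = 0 then r else 1 - r)) n
      {ω | t ≤ |∑ k : Fin n, (f (ω k.castSucc) -
        ∑ x, stepDist q (fun x y : Fin 2 =>
          if x = 0 then (if y = 0 then 1 - p else p)
          else (if y = 0 then r else 1 - r)) (k : ℕ) x * f x)|} ≤
      2 * Real.exp (-(2 * min (p ^ 2) (r ^ 2) * t ^ 2) / (n * (b - a) ^ 2)) := by
  have hP : ∀ x, IsProbVec (twoState p r x) := by
    intro x
    refine ⟨fun y => ?_, ?_⟩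
    · fin_cases x <;> fin_cases y <;> simp [twoState, hp.1.le, hp.2, hr.1.le, hr.2]
    · fin_cases x <;> simp [twoState]
  have hm0 : 0 < min p r := lt_min hp.1 hr.1
  have hc : ∀ n, |partialMean (twoState p r) f n 1 - partialMean (twoState p r) f n 0| ≤
      (b - a) / min p r := by
    intro n
    obtain ⟨h0, h1⟩ := geom_bound hp hr n
    have hfd : |f 1 - f 0| ≤ b - a :=
      abs_sub_le_of_le_of_le (hf 1).1 (hf 1).2 (hf 0).1 (hf 0).2
    have hba : 0 ≤ b - a := (abs_nonneg _).trans hfd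
    rw [partialMean_diff, abs_mul, abs_of_nonneg h0, div_eq_mul_one_div]
    refine mul_le_mul hfd ?_ h0 hba
    rwa [le_div_iff₀' hm0]
  have hmin : min (p ^ 2) (r ^ 2) = min p r ^ 2 := by
    rcases le_total p r with h | h
    · rw [min_eq_left h, min_eq_left (pow_le_pow_left₀ hp.1.le h 2)]
    · rw [min_eq_right h, min_eq_right (pow_le_pow_left₀ hr.1.le h 2)]
  -- This `s` minimises the Chernoff exponent; when `n (b - a)² = 0` it is `0` by the convention
  -- on division, and both sides of the exponent identity below vanish.
  have hs : 0 ≤ 4 * min p r ^ 2 * t / (n * (b - a) ^ 2) := by positivity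
  refine (chainProb_tail_le hP f hc hq n t hs).trans_eq ?_
  rw [hmin]
  congr 2
  rcases eq_or_ne ((n : ℝ) * (b - a) ^ 2) 0 with h | h
  · simp [h]
  · have hn : (n : ℝ) ≠ 0 := left_ne_zero_of_mul h
    have hba : b - a ≠ 0 := fun h' => h (by simp [h'])
    field_simp
    ring
end
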